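/- The set of CP distributions is closed in \mathcal{P}(\Xi) with the weak topology. In particular, if Q_n are CP distributions and Q_n \to Q weakly, then Q is M-invariant, adapted, and has Lebesgue intensity. -/

import Mathlib

open MeasureTheory Filter Topology

/-- `B₁ = [-1,1]^d`. -/
abbrev UnitCube (d : ℕ) : Set (Fin d → ℝ) := Set.Icc (fun _ => (-1:ℝ)) (fun _ => (1:ℝ))

noncomputable instance (d : ℕ) : MeasurableSpace (ProbabilityMeasure (UnitCube d)) := borel _
instance (d : ℕ) : BorelSpace (ProbabilityMeasure (UnitCube d)) := ⟨rfl⟩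

/-- `Ξ = 𝒫(B₁) × B₁`. -/
abbrev Xi (d : ℕ) := ProbabilityMeasure (UnitCube d) × UnitCube d

/-- The homothety mapping the first-level dyadic cube containing a point of `B₁`
onto `B₁` (applied coordinatewise). -/
noncomputable def cubeExpand (d : ℕ) (x : UnitCube d) : UnitCube d :=
  ⟨fun i => if (x : Fin d → ℝ) i < 0 then 2 * (x : Fin d → ℝ) i + 1
            else 2 * (x : Fin d → ℝ) i - 1, by
    obtain ⟨h₁, h₂⟩ := x.2
    refine ⟨fun i => ?_, fun i => ?_⟩ <;>
      · have a := h₁ i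
        have b := h₂ i
        simp only at a b ⊢
        split_ifs <;> linarith⟩

/-- The first-level dyadic cube of `B₁` containing `x` (as a subset of `B₁`). -/
def cubeOf (d : ℕ) (x : UnitCube d) : Set (UnitCube d) :=
  {y | ∀ i, ((y : Fin d → ℝ) i < 0 ↔ (x : Fin d → ℝ) i < 0)}

open scoped Classical in
/-- The dyadic magnification operator `M(μ,x) = (T_{D(x)}^□ μ, T_{D(x)} x)` on
`Ξ = 𝒫(B₁) × B₁`: the measure component is the normalized pushforward of `μ`
restricted to the first-level dyadic cube `D(x)` containing `x`, rescaled to `B₁`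
(with a junk value when the normalization is undefined). -/
noncomputable def magnify (d : ℕ) (p : Xi d) : Xi d :=
  if h : IsProbabilityMeasure
      ((((p.1 : Measure (UnitCube d)) (cubeOf d p.2))⁻¹ •
        ((p.1 : Measure (UnitCube d)).restrict (cubeOf d p.2)).map (cubeExpand d))) then
    (⟨_, h⟩, cubeExpand d p.2)
  else (p.1, cubeExpand d p.2)

/-- Adaptedness: `∫ f(ν,x) dQ(ν,x) = ∫∫ f(ν,x) dν(x) dQ̄(ν)` for all continuous `f`. -/
def Adapted (d : ℕ) (Q : Measure (Xi d)) : Prop :=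
  ∀ f : C(Xi d, ℝ),
    (∫ p, f p ∂Q) =
      ∫ ν, (∫ x, f (ν, x) ∂(ν : Measure (UnitCube d))) ∂(Q.map Prod.fst)

/-- Normalized Lebesgue measure on `B₁`. -/
noncomputable def normLeb (d : ℕ) : Measure (UnitCube d) :=
  ((2 : ENNReal) ^ d)⁻¹ • (volume : Measure (Fin d → ℝ)).comap Subtype.val

/-- The intensity measure `[Q](A) = ∫ μ(A) dQ̄(μ)` equals normalized Lebesgue measure. -/
def HasLebesgueIntensity (d : ℕ) (Q : Measure (Xi d)) : Prop :=
  ∀ A : Set (UnitCube d), MeasurableSet A →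
    (∫⁻ ν, (ν : Measure (UnitCube d)) A ∂(Q.map Prod.fst)) = normLeb d A

/-- A CP distribution: an `M`-invariant, adapted probability distribution on `Ξ`
with normalized-Lebesgue intensity. -/
def IsCPD (d : ℕ) (Q : Measure (Xi d)) : Prop :=
  IsProbabilityMeasure Q ∧ MeasurePreserving (magnify d) Q Q ∧
    Adapted d Q ∧ HasLebesgueIntensity d Q

/-!
By the continuous mapping theorem, invariance under a map passes to weak limits as soon as the map
is almost everywhere continuous for the limit. Adaptedness and Lebesgue intensity are closed
conditions: adaptedness equates the integrals of two continuous functions, and for adapted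
distributions the intensity is the law of the second coordinate. The limit `Q` therefore has both,
and they make `Q`-almost every `(ν, x)` a continuity point of `M`: the dyadic boundary is Lebesgue
null, hence `Q`-almost surely avoids `x` and is `ν`-null, while `ν (D(x)) > 0` because, given `ν`,
the point `x` has law `ν`.
-/

open ProbabilityTheory

section WeakConvergence

variable {X Y ι : Type*} [MeasurableSpace X] [TopologicalSpace X] {L : Filter ι}
  {μ : ProbabilityMeasure X} {μs : ι → ProbabilityMeasure X}

lemma measure_le_liminf_measure_of_ae_mem_nhds [OpensMeasurableSpace X] [HasOuterApproxClosed X]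
    (h : Tendsto μs L (𝓝 μ)) {A : Set X} (hA : ∀ᵐ x ∂(μ : Measure X), x ∈ A → A ∈ 𝓝 x) :
    (μ : Measure X) A ≤ L.liminf fun i => (μs i : Measure X) A :=
  calc (μ : Measure X) A ≤ (μ : Measure X) (interior A) :=
        measure_mono_ae <| hA.mono fun _ hx hxA => mem_interior_iff_mem_nhds.2 (hx hxA)
    _ ≤ L.liminf fun i => (μs i : Measure X) (interior A) :=
        ProbabilityMeasure.le_liminf_measure_open_of_tendsto h isOpen_interior
    _ ≤ L.liminf fun i => (μs i : Measure X) A :=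
        liminf_le_liminf (Eventually.of_forall fun _ => measure_mono interior_subset)

section Map

variable [OpensMeasurableSpace X] [MeasurableSpace Y] [TopologicalSpace Y] [BorelSpace Y]

lemma tendsto_map_of_ae_continuousAt [HasOuterApproxClosed X] [L.IsCountablyGenerated]
    {T : X → Y} (hT : Measurable T) (hTc : ∀ᵐ x ∂(μ : Measure X), ContinuousAt T x)
    (h : Tendsto μs L (𝓝 μ)) :
    Tendsto (fun i => (μs i).map hT.aemeasurable) L (𝓝 (μ.map hT.aemeasurable)) := by
  refine tendsto_of_forall_isOpen_le_liminf' fun G hG => ?_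
  simp only [ProbabilityMeasure.toMeasure_map, Measure.map_apply hT hG.measurableSet]
  exact measure_le_liminf_measure_of_ae_mem_nhds h <|
    hTc.mono fun x hx hxG => hx (hG.mem_nhds hxG)

lemma isClosed_setOf_map_eq [HasOuterApproxClosed Y] {T : X → Y} (hT : Continuous T)
    (m : Measure Y) :
    IsClosed {μ : ProbabilityMeasure X | (μ : Measure X).map T = m} := by
  have hm : {ν : ProbabilityMeasure Y | (ν : Measure Y) = m}.Subsingleton :=
    fun ν hν ν' hν' => Subtype.ext (hν.trans hν'.symm)
  exact hm.isClosed.preimage (ProbabilityMeasure.continuous_map hT)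

end Map

lemma measurePreserving_of_tendsto [BorelSpace X] [HasOuterApproxClosed X] [L.NeBot]
    [L.IsCountablyGenerated] {T : X → X}
    (hT : ∀ i, MeasurePreserving T (μs i : Measure X) (μs i : Measure X))
    (hTc : ∀ᵐ x ∂(μ : Measure X), ContinuousAt T x) (h : Tendsto μs L (𝓝 μ)) :
    MeasurePreserving T (μ : Measure X) (μ : Measure X) := by
  obtain ⟨i₀⟩ : Nonempty ι := L.nonempty_of_neBot
  have hTm : Measurable T := (hT i₀).measurable
  have hmap : ∀ i, (μs i).map hTm.aemeasurable = μs i := fun i => Subtype.ext (hT i).map_eq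
  have hlim : Tendsto μs L (𝓝 (μ.map hTm.aemeasurable)) := by
    simpa only [hmap] using tendsto_map_of_ae_continuousAt hTm hTc h
  exact ⟨hTm, congrArg ProbabilityMeasure.toMeasure (tendsto_nhds_unique hlim h)⟩

end WeakConvergence

section NormalizedRestrict

variable {X ι : Type*} [MeasurableSpace X]

/-- The conditional law `μ[|A]` as a probability measure, with the junk value of
`FiniteMeasure.normalize` when `μ A = 0`. -/
noncomputable def normalizedRestrict (μ : ProbabilityMeasure X) (A : Set X) :
    ProbabilityMeasure X :=
  haveI := μ.nonempty
  (μ.toFiniteMeasure.restrict A).normalize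

lemma toMeasure_normalizedRestrict {μ : ProbabilityMeasure X} {A : Set X}
    (hA : (μ : Measure X) A ≠ 0) :
    (normalizedRestrict μ A : Measure X) = (μ : Measure X)[|A] := by
  have := μ.nonempty
  have hμA : μ A ≠ 0 := fun h => hA ((μ.null_iff_toMeasure_null A).1 h)
  have hne : μ.toFiniteMeasure.restrict A ≠ 0 := by
    rw [← FiniteMeasure.mass_nonzero_iff, FiniteMeasure.restrict_mass]
    exact hμA
  rw [normalizedRestrict, FiniteMeasure.toMeasure_normalize_eq_of_nonzero _ hne,
    FiniteMeasure.restrict_mass, ProbabilityTheory.cond,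
    ← μ.ennreal_coeFn_eq_coeFn_toMeasure, ← ENNReal.coe_inv hμA]
  rfl

lemma tendsto_normalizedRestrict [TopologicalSpace X] [BorelSpace X] [HasOuterApproxClosed X]
    {L : Filter ι} [L.IsCountablyGenerated] {μ : ProbabilityMeasure X}
    {μs : ι → ProbabilityMeasure X} {A : Set X} (hAm : MeasurableSet A)
    (hA : (μ : Measure X) A ≠ 0) (hfr : (μ : Measure X) (frontier A) = 0)
    (h : Tendsto μs L (𝓝 μ)) :
    Tendsto (fun i => normalizedRestrict (μs i) A) L (𝓝 (normalizedRestrict μ A)) := by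
  have hmass : Tendsto (fun i => (μs i : Measure X) A) L (𝓝 ((μ : Measure X) A)) :=
    ProbabilityMeasure.tendsto_measure_of_null_frontier_of_tendsto' h hfr
  refine tendsto_of_forall_isOpen_le_liminf' fun G hG => ?_
  have hAG : (μ : Measure X) (A ∩ G) ≤ L.liminf fun i => (μs i : Measure X) (A ∩ G) := by
    refine measure_le_liminf_measure_of_ae_mem_nhds h ?_
    filter_upwards [measure_eq_zero_iff_ae_notMem.1 hfr] with x hx hxAG
    have hxA : A ∈ 𝓝 x := mem_interior_iff_mem_nhds.1 <|
      by_contra fun hxi => hx ⟨subset_closure hxAG.1, hxi⟩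
    exact inter_mem hxA (hG.mem_nhds hxAG.2)
  calc (normalizedRestrict μ A : Measure X) G
      = ((μ : Measure X) A)⁻¹ * (μ : Measure X) (A ∩ G) := by
        rw [toMeasure_normalizedRestrict hA, cond_apply hAm]
    _ ≤ (L.liminf fun i => ((μs i : Measure X) A)⁻¹) *
          L.liminf fun i => (μs i : Measure X) (A ∩ G) := by
        rcases L.eq_or_neBot with rfl | _
        · simp
        · rw [(tendsto_inv_iff.2 hmass).liminf_eq]
          gcongr
    _ ≤ L.liminf fun i => ((μs i : Measure X) A)⁻¹ * (μs i : Measure X) (A ∩ G) :=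
        ENNReal.le_liminf_mul
    _ = L.liminf fun i => (normalizedRestrict (μs i) A : Measure X) G := by
        refine liminf_congr ?_
        filter_upwards [hmass.eventually_ne hA] with i hi
        rw [toMeasure_normalizedRestrict hi, cond_apply hAm]

end NormalizedRestrict

section CompactIntegration

variable {E : Type*} [TopologicalSpace E] [CompactSpace E] [MeasurableSpace E]
  [OpensMeasurableSpace E]

lemma lipschitzWith_integral_continuousMap (μ : Measure E) [IsProbabilityMeasure μ] :
    LipschitzWith 1 fun g : C(E, ℝ) => ∫ x, g x ∂μ := by
  have hint : ∀ g : C(E, ℝ), Integrable g μ := fun g =>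
    (BoundedContinuousFunction.mkOfCompact g).integrable μ
  refine LipschitzWith.of_dist_le_mul fun g g' => ?_
  rw [NNReal.coe_one, one_mul, dist_eq_norm, dist_eq_norm, ← integral_sub (hint g) (hint g')]
  exact (BoundedContinuousFunction.mkOfCompact (g - g')).norm_integral_le_norm μ

lemma continuous_integral_prod_probabilityMeasure :
    Continuous fun p : C(E, ℝ) × ProbabilityMeasure E => ∫ x, p.1 x ∂(p.2 : Measure E) :=
  continuous_prod_of_continuous_lipschitzWith _ 1
    (fun g => ProbabilityMeasure.continuous_integral_continuousMap g)
    (fun μ => lipschitzWith_integral_continuousMap (μ : Measure E))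

end CompactIntegration

section Disintegration

variable {α Ω ι : Type*} [MeasurableSpace α] [MeasurableSpace Ω] {ρ : Measure (α × Ω)}
  [SFinite ρ] {κ : Kernel α Ω} [IsSFiniteKernel κ] [ρ.IsCondKernel κ]

variable (κ) in
lemma ae_kernel_apply_eq_zero_of_snd_eq_zero {N : Set Ω} (hN : ρ.snd N = 0) :
    ∀ᵐ p ∂ρ, κ p.1 N = 0 := by
  have hsnd : ∀ᵐ p ∂(ρ.fst ⊗ₘ κ), p.2 ∉ N := by
    rw [ρ.disintegrate κ]
    exact ae_of_ae_map measurable_snd.aemeasurable (measure_eq_zero_iff_ae_notMem.1 hN)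
  have hfst : ∀ᵐ a ∂ρ.fst, κ a N = 0 :=
    (Measure.ae_ae_of_ae_compProd hsnd).mono fun _ ha => measure_eq_zero_iff_ae_notMem.2 ha
  exact ae_of_ae_map measurable_fst.aemeasurable hfst

variable (ρ κ) in
lemma ae_kernel_apply_fiber_ne_zero [Countable ι] [MeasurableSpace ι]
    [MeasurableSingletonClass ι] {f : Ω → ι} (hf : Measurable f) :
    ∀ᵐ p ∂ρ, κ p.1 (f ⁻¹' {f p.2}) ≠ 0 := by
  suffices h : ∀ᵐ p ∂ρ, ∀ i, p ∉ {a | κ a (f ⁻¹' {i}) = 0} ×ˢ (f ⁻¹' {i}) by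
    filter_upwards [h] with p hp h0 using hp (f p.2) ⟨h0, rfl⟩
  refine ae_all_iff.2 fun i => measure_eq_zero_iff_ae_notMem.1 ?_
  have hi : MeasurableSet (f ⁻¹' {i}) := hf (measurableSet_singleton i)
  have hnull : MeasurableSet {a | κ a (f ⁻¹' {i}) = 0} :=
    κ.measurable_coe hi (measurableSet_singleton 0)
  rw [← ρ.disintegrate κ, Measure.compProd_apply_prod hnull hi]
  exact setLIntegral_eq_zero hnull fun _ ha => ha

end Disintegration

lemma measurable_toMeasure_of_continuous {X E : Type*} [TopologicalSpace X] [MeasurableSpace X]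
    [OpensMeasurableSpace X] [TopologicalSpace E] [MeasurableSpace E] [BorelSpace E]
    [HasOuterApproxClosed E] {μ : X → ProbabilityMeasure E} (hμ : Continuous μ) :
    Measurable fun x => (μ x : Measure E) := by
  refine Measurable.measure_of_isPiSystem_of_isProbabilityMeasure (S := {F | IsClosed F})
    (BorelSpace.measurable_eq.trans borel_eq_generateFrom_isClosed) isPiSystem_isClosed
    fun F hF => ?_
  have happr : ∀ n, Measurable fun x => ∫⁻ y, hF.apprSeq n y ∂(μ x : Measure E) := fun n =>
    ((ProbabilityMeasure.continuous_lintegral_boundedContinuousFunction _).comp hμ).measurable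
  exact measurable_of_tendsto_metrizable happr <| tendsto_pi_nhds.2 fun x =>
    HasOuterApproxClosed.tendsto_lintegral_apprSeq hF _

lemma frontier_preimage_subset_of_eventually_eq {X α : Type*} [TopologicalSpace X] {f : X → α}
    {N : Set X} (hf : ∀ x ∉ N, ∀ᶠ y in 𝓝 x, f y = f x) (S : Set α) :
    frontier (f ⁻¹' S) ⊆ N := by
  intro x hx
  by_contra hxN
  by_cases hxS : f x ∈ S
  · refine hx.2 (mem_interior_iff_mem_nhds.2 ?_)
    filter_upwards [hf x hxN] with y hy using Set.mem_preimage.2 (hy ▸ hxS)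
  · obtain ⟨y, hyx, hyS⟩ := mem_closure_iff_nhds.1 hx.1 _ (hf x hxN)
    exact hxS (hyx ▸ hyS)

section Adapted

variable {d : ℕ}

/-- The tautological Markov kernel `ν ↦ ν`, for which adaptedness means that `x` has conditional
law `ν` given `ν`. -/
noncomputable def evalKernel (d : ℕ) : Kernel (ProbabilityMeasure (UnitCube d)) (UnitCube d) :=
  ⟨fun ν => (ν : Measure (UnitCube d)), measurable_toMeasure_of_continuous continuous_id⟩

instance : IsMarkovKernel (evalKernel d) := ⟨fun ν => ν.2⟩

lemma Adapted.isCondKernel {Q : Measure (Xi d)} [IsFiniteMeasure Q] (hQ : Adapted d Q) :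
    Q.IsCondKernel (evalKernel d) := by
  refine ⟨ext_of_forall_integral_eq_of_IsFiniteMeasure fun f => ?_⟩
  rw [Measure.integral_compProd (f.integrable _)]
  exact (hQ f.toContinuousMap).symm

lemma hasLebesgueIntensity_iff_snd_eq {Q : Measure (Xi d)} [SFinite Q]
    [Q.IsCondKernel (evalKernel d)] : HasLebesgueIntensity d Q ↔ Q.snd = normLeb d := by
  have hsnd : ∀ A, MeasurableSet A →
      Q.snd A = ∫⁻ ν, (ν : Measure (UnitCube d)) A ∂(Q.map Prod.fst) := by
    intro A hA
    rw [← Q.disintegrate (evalKernel d), Measure.snd_compProd,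
      Measure.bind_apply hA (evalKernel d).aemeasurable, Q.disintegrate (evalKernel d)]
    rfl
  exact ⟨fun h => Measure.ext fun A hA => (hsnd A hA).trans (h A hA),
    fun h A hA => (hsnd A hA).symm.trans (congrArg (· A) h)⟩

lemma isClosed_setOf_adapted :
    IsClosed {Q : ProbabilityMeasure (Xi d) | Adapted d (Q : Measure (Xi d))} := by
  simp_rw [_root_.Adapted, Set.ofPred_forall]
  refine isClosed_iInter fun f => ?_
  have hg : Continuous fun ν : ProbabilityMeasure (UnitCube d) =>
      ∫ x, f (ν, x) ∂(ν : Measure (UnitCube d)) :=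
    continuous_integral_prod_probabilityMeasure.comp (f.curry.continuous.prodMk continuous_id)
  let g : C(Xi d, ℝ) := ⟨_, hg.comp continuous_fst⟩
  have hgQ : ∀ Q : ProbabilityMeasure (Xi d),
      ∫ ν, (∫ x, f (ν, x) ∂(ν : Measure (UnitCube d))) ∂((Q : Measure (Xi d)).map Prod.fst) =
        ∫ p, g p ∂(Q : Measure (Xi d)) := fun Q =>
    integral_map measurable_fst.aemeasurable hg.aestronglyMeasurable
  simp only [hgQ]
  exact isClosed_eq (ProbabilityMeasure.continuous_integral_continuousMap f)
    (ProbabilityMeasure.continuous_integral_continuousMap g)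

end Adapted

section DyadicCubes

variable {d : ℕ}

/-- The union of the boundaries, inside `B₁`, of the first-level dyadic cubes. -/
def dyadicBoundary (d : ℕ) : Set (UnitCube d) := {x | ∃ i, (x : Fin d → ℝ) i = 0}

/-- The set of negative coordinates of `x`, which labels the first-level dyadic cube `D(x)`. -/
def negCoords (x : UnitCube d) : Set (Fin d) := {i | (x : Fin d → ℝ) i < 0}

lemma continuous_coord (i : Fin d) : Continuous fun x : UnitCube d => (x : Fin d → ℝ) i :=
  (continuous_apply i).comp continuous_subtype_val

lemma measurableSet_coord_neg (i : Fin d) :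
    MeasurableSet {x : UnitCube d | (x : Fin d → ℝ) i < 0} :=
  (isOpen_lt (continuous_coord i) continuous_const).measurableSet

lemma measurable_negCoords : Measurable (negCoords (d := d)) :=
  measurable_set_iff.2 fun i => measurableSet_setOfPred.1 (measurableSet_coord_neg i)

lemma cubeOf_eq_preimage (x : UnitCube d) : cubeOf d x = negCoords ⁻¹' {negCoords x} := by
  ext y
  simp [cubeOf, negCoords, Set.ext_iff]

lemma measurableSet_cubeOf (x : UnitCube d) : MeasurableSet (cubeOf d x) := by
  rw [cubeOf_eq_preimage]
  exact measurable_negCoords (measurableSet_singleton _)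

lemma eventually_negCoords_eq {x : UnitCube d} (hx : x ∉ dyadicBoundary d) :
    ∀ᶠ y in 𝓝 x, negCoords y = negCoords x := by
  simp only [negCoords, Set.ext_iff, Set.mem_ofPred_eq]
  refine eventually_all.2 fun i => ?_
  have hcoord := (continuous_coord i).tendsto x
  rcases lt_or_gt_of_ne fun h => hx ⟨i, h⟩ with hi | hi
  · filter_upwards [hcoord.eventually_lt_const hi] with y hy using iff_of_true hy hi
  · filter_upwards [hcoord.eventually_const_lt hi] with y hy using
      iff_of_false hy.not_gt hi.not_gt

lemma frontier_cubeOf_subset (x : UnitCube d) : frontier (cubeOf d x) ⊆ dyadicBoundary d := by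
  rw [cubeOf_eq_preimage]
  exact frontier_preimage_subset_of_eventually_eq (fun _ => eventually_negCoords_eq) _

lemma normLeb_dyadicBoundary : normLeb d (dyadicBoundary d) = 0 := by
  have hvol : volume (Subtype.val '' dyadicBoundary d) = 0 := by
    have hsub : Subtype.val '' dyadicBoundary d ⊆ ⋃ i, {y : Fin d → ℝ | y i = 0} := by
      rintro _ ⟨x, ⟨i, hi⟩, rfl⟩
      exact Set.mem_iUnion.2 ⟨i, hi⟩
    exact measure_mono_null hsub <| measure_iUnion_null fun i => Measure.pi_hyperplane _ i 0
  rw [normLeb, Measure.smul_apply, comap_subtype_coe_apply measurableSet_Icc, hvol, smul_zero]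

lemma measurable_cubeExpand : Measurable (cubeExpand d) := by
  refine Measurable.subtype_mk (measurable_pi_lambda _ fun i => ?_)
  have hcoord := (continuous_coord (d := d) i).measurable
  exact Measurable.ite (measurableSet_coord_neg i)
    ((hcoord.const_mul 2).add_const 1) ((hcoord.const_mul 2).sub_const 1)

lemma continuousAt_cubeExpand {x : UnitCube d} (hx : x ∉ dyadicBoundary d) :
    ContinuousAt (cubeExpand d) x := by
  refine IsInducing.subtypeVal.continuousAt_iff.2 (continuousAt_pi.2 fun i => ?_)
  have hcoord := continuous_coord i
  have hsign : ∀ᶠ y : UnitCube d in 𝓝 x, ((y : Fin d → ℝ) i < 0 ↔ (x : Fin d → ℝ) i < 0) :=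
    (eventually_negCoords_eq hx).mono fun _ hy => Set.ext_iff.1 hy i
  by_cases hxi : (x : Fin d → ℝ) i < 0
  · refine ((hcoord.const_mul 2).add_const 1).continuousAt.congr ?_
    filter_upwards [hsign] with y hy using (if_pos (hy.2 hxi)).symm
  · refine ((hcoord.const_mul 2).sub (continuous_const (y := 1))).continuousAt.congr ?_
    filter_upwards [hsign] with y hy using (if_neg (mt hy.1 hxi)).symm

end DyadicCubes

section Magnify

variable {d : ℕ}

lemma magnify_snd (p : Xi d) : (magnify d p).2 = cubeExpand d p.2 := by
  unfold magnify
  split_ifs <;> rfl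

lemma magnify_fst {p : Xi d} (hp : (p.1 : Measure (UnitCube d)) (cubeOf d p.2) ≠ 0) :
    (magnify d p).1 =
      (normalizedRestrict p.1 (cubeOf d p.2)).map measurable_cubeExpand.aemeasurable := by
  have hmap : (((p.1 : Measure (UnitCube d)) (cubeOf d p.2))⁻¹ •
      ((p.1 : Measure (UnitCube d)).restrict (cubeOf d p.2)).map (cubeExpand d)) =
      ((normalizedRestrict p.1 (cubeOf d p.2)).map
        measurable_cubeExpand.aemeasurable : Measure (UnitCube d)) := by
    rw [ProbabilityMeasure.toMeasure_map, toMeasure_normalizedRestrict hp,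
      ProbabilityTheory.cond, Measure.map_smul]
  rw [magnify, dif_pos (hmap ▸ inferInstance)]
  exact Subtype.ext hmap

lemma continuousAt_magnify {p : Xi d} (hx : p.2 ∉ dyadicBoundary d)
    (hν : (p.1 : Measure (UnitCube d)) (dyadicBoundary d) = 0)
    (hD : (p.1 : Measure (UnitCube d)) (cubeOf d p.2) ≠ 0) : ContinuousAt (magnify d) p := by
  have hsnd : ContinuousAt (fun q => (magnify d q).2) p := by
    simp only [magnify_snd]
    exact ContinuousAt.comp (f := Prod.snd) (continuousAt_cubeExpand hx) continuousAt_snd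
  have hfr : (p.1 : Measure (UnitCube d)) (frontier (cubeOf d p.2)) = 0 :=
    measure_mono_null (frontier_cubeOf_subset p.2) hν
  have hcube : ∀ᶠ q : Xi d in 𝓝 p, cubeOf d q.2 = cubeOf d p.2 := by
    filter_upwards [continuousAt_snd.eventually (eventually_negCoords_eq hx)] with q hq
    rw [cubeOf_eq_preimage, hq, ← cubeOf_eq_preimage]
  have hpos : ∀ᶠ q : Xi d in 𝓝 p, (q.1 : Measure (UnitCube d)) (cubeOf d p.2) ≠ 0 :=
    (ProbabilityMeasure.tendsto_measure_of_null_frontier_of_tendsto' continuousAt_fst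
      hfr).eventually_ne hD
  have hcont : ∀ᵐ x ∂(normalizedRestrict p.1 (cubeOf d p.2) : Measure (UnitCube d)),
      ContinuousAt (cubeExpand d) x := by
    rw [toMeasure_normalizedRestrict hD]
    refine cond_absolutelyContinuous.ae_le ?_
    exact (measure_eq_zero_iff_ae_notMem.1 hν).mono fun _ => continuousAt_cubeExpand
  have hlim := tendsto_map_of_ae_continuousAt measurable_cubeExpand hcont <|
    tendsto_normalizedRestrict (measurableSet_cubeOf p.2) hD hfr continuousAt_fst
  have hfst : ContinuousAt (fun q => (magnify d q).1) p := by
    rw [ContinuousAt, magnify_fst hD]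
    refine hlim.congr' ?_
    filter_upwards [hcube, hpos] with q hq hq0
    rw [magnify_fst (by rwa [hq]), hq]
  exact hfst.prodMk hsnd

lemma ae_continuousAt_magnify {Q : Measure (Xi d)} [SFinite Q] [Q.IsCondKernel (evalKernel d)]
    (hQ : Q.snd = normLeb d) : ∀ᵐ p ∂Q, ContinuousAt (magnify d) p := by
  have hnull : Q.snd (dyadicBoundary d) = 0 := by rw [hQ, normLeb_dyadicBoundary]
  have hx : ∀ᵐ p ∂Q, p.2 ∉ dyadicBoundary d :=
    ae_of_ae_map measurable_snd.aemeasurable (measure_eq_zero_iff_ae_notMem.1 hnull)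
  filter_upwards [hx, ae_kernel_apply_eq_zero_of_snd_eq_zero (evalKernel d) hnull,
    ae_kernel_apply_fiber_ne_zero Q (evalKernel d) measurable_negCoords] with p hpx hpν hpD
  exact continuousAt_magnify hpx hpν (by rwa [cubeOf_eq_preimage])

end Magnify

lemma IsCPD.of_tendsto {d : ℕ} {ι : Type*} {L : Filter ι} [L.NeBot] [L.IsCountablyGenerated]
    {Qs : ι → ProbabilityMeasure (Xi d)} {Q : ProbabilityMeasure (Xi d)}
    (hQs : ∀ i, IsCPD d (Qs i : Measure (Xi d))) (h : Tendsto Qs L (𝓝 Q)) :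
    IsCPD d (Q : Measure (Xi d)) := by
  have hA : Adapted d (Q : Measure (Xi d)) :=
    isClosed_setOf_adapted.mem_of_tendsto h <| Eventually.of_forall fun i => (hQs i).2.2.1
  have hsnd : (Q : Measure (Xi d)).snd = normLeb d := by
    refine (isClosed_setOf_map_eq continuous_snd (normLeb d)).mem_of_tendsto h <|
      Eventually.of_forall fun i => ?_
    have := (hQs i).2.2.1.isCondKernel
    exact hasLebesgueIntensity_iff_snd_eq.1 (hQs i).2.2.2
  have := hA.isCondKernel
  have hinv : MeasurePreserving (magnify d) (Q : Measure (Xi d)) (Q : Measure (Xi d)) :=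
    measurePreserving_of_tendsto (fun i => (hQs i).2.1) (ae_continuousAt_magnify hsnd) h
  exact ⟨inferInstance, hinv, hA, hasLebesgueIntensity_iff_snd_eq.2 hsnd⟩

/-- The set of CP distributions is closed in `𝒫(Ξ)` with the weak topology; in
particular, a weak limit of CP distributions is `M`-invariant, adapted, and has
Lebesgue intensity. -/
theorem isClosed_isCPD (d : ℕ) :
    IsClosed {Q : ProbabilityMeasure (Xi d) | IsCPD d (Q : Measure (Xi d))} ∧
    ∀ (Qn : ℕ → ProbabilityMeasure (Xi d)) (Q : ProbabilityMeasure (Xi d)),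
      (∀ n, IsCPD d (Qn n : Measure (Xi d))) → Tendsto Qn atTop (nhds Q) →
      MeasurePreserving (magnify d) (Q : Measure (Xi d)) (Q : Measure (Xi d)) ∧
        Adapted d (Q : Measure (Xi d)) ∧ HasLebesgueIntensity d (Q : Measure (Xi d)) := by
  exact ⟨IsSeqClosed.isClosed fun _ _ hQn h => IsCPD.of_tendsto hQn h,
    fun _ _ hQn h => (IsCPD.of_tendsto hQn h).2⟩
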